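/- arXiv:1510.06920 — 8 statements merged into one kernel-verified Lean document; each statement's English description precedes it below -/
import Mathlib

section
/- If there exists a subset I₁ ⊆ {1,…,d} with ∑_{i∈I₁} s_i = ∑_{i∉I₁} s_i, then the parameter vectors w₁ = ∑_{i∈I₁} e_i and w₂ = ∑_{i∉I₁} e_i satisfy: for every index i ∈ {1,…,2d+1}, either w₁ᵀx_i = y_i or w₂ᵀx_i = y_i (i.e., the constructed switching-regression instance with two modes admits a zero-error solution). -/
/-!
Each of the first `2d` points has a single nonzero coordinate `k`, where it equals `s k`, so a
`0/1` vector `w` predicts `w k * s k` there. Exactly one of the two complementary indicator vectors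
has `w k = 1`; it fits the point with label `s k`, and the other one fits the point with label `0`.
On the last point the first vector predicts `∑_{I₁} s`, which is half of the total by balance.
-/

/-- If the Partition instance `s` admits a balanced subset `I₁`, then the parameter
vectors `w₁ = ∑_{i∈I₁} e_i` and `w₂ = ∑_{i∉I₁} e_i` give a zero-error fit of the
constructed switching-regression data set of `2d+1` points. -/
theorem stmt_0 (d : ℕ) (s : Fin d → ℤ) (hs : ∀ i, 0 < s i)
    (x : Fin (2 * d + 1) → Fin d → ℝ) (y : Fin (2 * d + 1) → ℝ)
    (hx : ∀ (i : Fin (2 * d + 1)) (k : Fin d),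
      x i k = if (i : ℕ) = 2 * d then (s k : ℝ)
              else if (i : ℕ) = (k : ℕ) ∨ (i : ℕ) = (k : ℕ) + d then (s k : ℝ) else 0)
    (hy : ∀ i : Fin (2 * d + 1),
      y i = if h : (i : ℕ) < d then (s ⟨(i : ℕ), h⟩ : ℝ)
            else if (i : ℕ) < 2 * d then 0 else (∑ k, (s k : ℝ)) / 2)
    (I₁ : Finset (Fin d)) (hI : ∑ i ∈ I₁, s i = ∑ i ∈ I₁ᶜ, s i) :
    ∀ i : Fin (2 * d + 1),
      (∑ k, (if k ∈ I₁ then (1 : ℝ) else 0) * x i k = y i) ∨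
      (∑ k, (if k ∈ I₁ then (0 : ℝ) else 1) * x i k = y i) := by
  intro i
  -- The prediction of any `w` at a point supported on the coordinate `k₀`.
  have single : ∀ (w : Fin d → ℝ) (k₀ : Fin d), (i : ℕ) < 2 * d →
      ((i : ℕ) = k₀ ∨ (i : ℕ) = k₀ + d) → ∑ k, w k * x i k = w k₀ * s k₀ := by
    intro w k₀ hi hk
    rw [Finset.sum_eq_single k₀]
    · rw [hx, if_neg hi.ne, if_pos hk]
    · intro k _ hne
      have hne' : (k : ℕ) ≠ k₀ := fun h => hne (Fin.ext h)
      have := k.isLt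
      have := k₀.isLt
      rw [hx, if_neg hi.ne, if_neg (by omega), mul_zero]
    · simp
  by_cases h1 : (i : ℕ) < d
  · have h := fun w => single w ⟨i, h1⟩ (by omega) (Or.inl rfl)
    rw [h, h, hy, dif_pos h1]
    by_cases hm : (⟨i, h1⟩ : Fin d) ∈ I₁ <;> simp [hm]
  by_cases h2 : (i : ℕ) < 2 * d
  · have h := fun w => single w ⟨i - d, by omega⟩ h2 (Or.inr (by simp only; omega))
    rw [h, h, hy, dif_neg h1, if_pos h2]
    by_cases hm : (⟨i - d, by omega⟩ : Fin d) ∈ I₁ <;> simp [hm]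
  · left
    have h3 : (i : ℕ) = 2 * d := by omega
    have hI' : ∑ k ∈ I₁, (s k : ℝ) = ∑ k ∈ I₁ᶜ, (s k : ℝ) := by exact_mod_cast hI
    have htot := Finset.sum_add_sum_compl I₁ (fun k => (s k : ℝ))
    have hpred : ∑ k, (if k ∈ I₁ then (1 : ℝ) else 0) * x i k = ∑ k ∈ I₁, (s k : ℝ) := by
      simp [hx, h3, Finset.sum_ite_mem]
    rw [hpred, hy, dif_neg h1, if_neg h2]
    linarith
end

section
/- If there exist vectors w₁, w₂ ∈ ℝ^d such that for every index i ∈ {1,…,2d+1}, either w₁ᵀx_i = y_i or w₂ᵀx_i = y_i, then there exists a subset I₁ ⊆ {1,…,d} with ∑_{i∈I₁} s_i = ∑_{i∉I₁} s_i. -/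
/-!
The points indexed `k` and `k + d` share the input `s k • e k` but have the distinct outputs `s k`
and `0`, so one model must fit the first and the other model the second. As `s k ≠ 0`, this forces
`{w₁ k, w₂ k} = {0, 1}` for every `k`: both models are 0/1 vectors. Whichever of them fits the last
point has a support on which `s` sums to half of its total (`exists_balanced_of_zero_one`).
-/

/-- A 0/1 vector picking out half of the total weight is the indicator of a balanced subset. -/
lemma exists_balanced_of_zero_one {d : ℕ} (s : Fin d → ℤ) (w : Fin d → ℝ)
    (hw : ∀ k, w k = 0 ∨ w k = 1)
    (h : ∑ k, w k * (s k : ℝ) = (∑ k, (s k : ℝ)) / 2) :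
    ∃ I₁ : Finset (Fin d), ∑ i ∈ I₁, s i = ∑ i ∈ I₁ᶜ, s i := by
  classical
  refine ⟨Finset.univ.filter (fun k => w k = 1), ?_⟩
  have h1 : ∑ k, w k * (s k : ℝ) = ∑ k ∈ Finset.univ.filter (fun k => w k = 1), (s k : ℝ) := by
    rw [Finset.sum_filter]
    refine Finset.sum_congr rfl fun k _ => ?_
    rcases hw k with h0 | h0 <;> simp [h0]
  have h2 := Finset.sum_add_sum_compl (Finset.univ.filter (fun k => w k = 1))
    (fun k => (s k : ℝ))
  have h3 : ∑ k ∈ Finset.univ.filter (fun k => w k = 1), (s k : ℝ)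
      = ∑ k ∈ (Finset.univ.filter (fun k => w k = 1))ᶜ, (s k : ℝ) := by linarith
  exact_mod_cast h3


/-- If the constructed switching-regression instance of `2d+1` points admits a
zero-error fit with two linear models `w₁, w₂`, then the Partition instance `s`
admits a balanced subset `I₁`. -/
theorem stmt_1 (d : ℕ) (s : Fin d → ℤ) (hs : ∀ i, 0 < s i)
    (x : Fin (2 * d + 1) → Fin d → ℝ) (y : Fin (2 * d + 1) → ℝ)
    (hx : ∀ (i : Fin (2 * d + 1)) (k : Fin d),
      x i k = if (i : ℕ) = 2 * d then (s k : ℝ)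
              else if (i : ℕ) = (k : ℕ) ∨ (i : ℕ) = (k : ℕ) + d then (s k : ℝ) else 0)
    (hy : ∀ i : Fin (2 * d + 1),
      y i = if h : (i : ℕ) < d then (s ⟨(i : ℕ), h⟩ : ℝ)
            else if (i : ℕ) < 2 * d then 0 else (∑ k, (s k : ℝ)) / 2)
    (w₁ w₂ : Fin d → ℝ)
    (hfit : ∀ i : Fin (2 * d + 1),
      (∑ k, w₁ k * x i k = y i) ∨ (∑ k, w₂ k * x i k = y i)) :
    ∃ I₁ : Finset (Fin d), ∑ i ∈ I₁, s i = ∑ i ∈ I₁ᶜ, s i := by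
  have key : ∀ k, (w₁ k = 0 ∨ w₁ k = 1) ∧ (w₂ k = 0 ∨ w₂ k = 1) := by
    intro k
    have hk := k.isLt
    have hs0 : (s k : ℝ) ≠ 0 := by exact_mod_cast (hs k).ne'
    have hsum : ∀ (i : Fin (2 * d + 1)), ((i : ℕ) = k ∨ (i : ℕ) = k + d) →
        ∀ w : Fin d → ℝ, ∑ j, w j * x i j = w k * (s k : ℝ) := by
      intro i hi w
      rw [Finset.sum_eq_single k]
      · rw [hx, if_neg (by omega), if_pos hi]
      · intro j _ hj
        have hj' : (j : ℕ) ≠ k := fun h => hj (Fin.ext h)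
        have := j.isLt
        rw [hx, if_neg (by omega), if_neg (by omega), mul_zero]
      · simp
    have ha := hfit ⟨k, by omega⟩
    have hb := hfit ⟨k + d, by omega⟩
    rw [hsum _ (Or.inl rfl), hsum _ (Or.inl rfl), hy, dif_pos hk] at ha
    rw [hsum _ (Or.inr rfl), hsum _ (Or.inr rfl), hy, dif_neg (by simp),
      if_pos (by simp only; omega)] at hb
    simp only [Fin.eta, mul_eq_right₀ hs0] at ha
    simp only [mul_eq_zero, hs0, or_false] at hb
    -- the same model cannot take both values, so the two fits come from different models
    rcases ha with ha | ha <;> rcases hb with hb | hb <;> simp_all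
  have hlast := hfit (Fin.last (2 * d))
  rw [hy, dif_neg (by simp only [Fin.val_last]; omega), if_neg (by simp)] at hlast
  simp only [hx, Fin.val_last, if_true] at hlast
  rcases hlast with h | h
  · exact exists_balanced_of_zero_one s w₁ (fun k => (key k).1) h
  · exact exists_balanced_of_zero_one s w₂ (fun k => (key k).2) h
end

section
/- The following are equivalent: (a) there exists a subset I₁ ⊆ {1,…,d} with ∑_{i∈I₁} s_i = ∑_{i∉I₁} s_i (the Partition problem has an affirmative answer); (b) there exist vectors w₁, w₂ ∈ ℝ^d such that for every index i ∈ {1,…,2d+1}, either w₁ᵀx_i = y_i or w₂ᵀx_i = y_i (the constructed two-mode switching linear regression instance admits an exact, zero-error fit). -/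
/-!
Dividing by `s k ≠ 0`, the points `s k • e k` with labels `s k` and `0` say that, for every `k`, one
of `w₁ k`, `w₂ k` is `1` and one of them is `0`. Hence `w₁` and `w₂` are the indicator vectors of a
set and of its complement, and the last point, fitted by either vector, says that the corresponding
set carries half of the total sum (`partition_iff_indicator`), i.e. solves Partition.
-/

/-- A set solves Partition iff its indicator vector fits the last data point. -/
lemma partition_iff_indicator {d : ℕ} (s : Fin d → ℤ) (I : Finset (Fin d)) :
    ∑ i ∈ I, s i = ∑ i ∈ Iᶜ, s i ↔
      ∑ k, (if k ∈ I then (1 : ℝ) else 0) * (s k : ℝ) = (∑ k, (s k : ℝ)) / 2 := by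
  have h1 : ∑ k, (if k ∈ I then (1 : ℝ) else 0) * (s k : ℝ) = ∑ k ∈ I, (s k : ℝ) := by
    simp [ite_mul, Finset.sum_ite_mem]
  rw [h1, ← Finset.sum_add_sum_compl I (fun k => (s k : ℝ)), ← @Int.cast_inj ℝ]
  push_cast
  constructor <;> intro h <;> linarith


/-- The Partition problem on `s` has an affirmative answer iff the constructed
two-mode switching linear regression instance of `2d+1` points admits an exact
(zero-error) fit. -/
theorem stmt_2 (d : ℕ) (s : Fin d → ℤ) (hs : ∀ i, 0 < s i)
    (x : Fin (2 * d + 1) → Fin d → ℝ) (y : Fin (2 * d + 1) → ℝ)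
    (hx : ∀ (i : Fin (2 * d + 1)) (k : Fin d),
      x i k = if (i : ℕ) = 2 * d then (s k : ℝ)
              else if (i : ℕ) = (k : ℕ) ∨ (i : ℕ) = (k : ℕ) + d then (s k : ℝ) else 0)
    (hy : ∀ i : Fin (2 * d + 1),
      y i = if h : (i : ℕ) < d then (s ⟨(i : ℕ), h⟩ : ℝ)
            else if (i : ℕ) < 2 * d then 0 else (∑ k, (s k : ℝ)) / 2) :
    (∃ I₁ : Finset (Fin d), ∑ i ∈ I₁, s i = ∑ i ∈ I₁ᶜ, s i) ↔
    (∃ w₁ w₂ : Fin d → ℝ, ∀ i : Fin (2 * d + 1),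
      (∑ k, w₁ k * x i k = y i) ∨ (∑ k, w₂ k * x i k = y i)) := by
  have hs0 : ∀ k, (s k : ℝ) ≠ 0 := fun k => by exact_mod_cast (hs k).ne'
  have fit_iff : ∀ (w : Fin d → ℝ) (k : Fin d) (i : Fin (2 * d + 1)),
      ((i : ℕ) = k ∨ (i : ℕ) = k + d) → ∑ j, w j * x i j = w k * (s k : ℝ) := by
    intro w k i hi
    have hk := k.isLt
    rw [Finset.sum_eq_single k]
    · rw [hx, if_neg (by omega), if_pos hi]
    · intro j _ hj
      have hj' : (j : ℕ) ≠ k := fun h => hj (Fin.ext h)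
      have := j.isLt
      rw [hx, if_neg (by omega), if_neg (by omega), mul_zero]
    · simp
  have fit_one : ∀ (w : Fin d → ℝ) (k : Fin d) (i : Fin (2 * d + 1)), (i : ℕ) = k →
      (∑ j, w j * x i j = y i ↔ w k = 1) := by
    intro w k i hi
    have hyi : y i = s k := by
      rw [hy, dif_pos (by omega)]
      congr 2
      exact Fin.ext hi
    rw [fit_iff w k i (Or.inl hi), hyi, mul_eq_right₀ (hs0 k)]
  have fit_zero : ∀ (w : Fin d → ℝ) (k : Fin d) (i : Fin (2 * d + 1)), (i : ℕ) = k + d →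
      (∑ j, w j * x i j = y i ↔ w k = 0) := by
    intro w k i hi
    have hyi : y i = 0 := by
      rw [hy, dif_neg (by omega), if_pos (by omega)]
    rw [fit_iff w k i (Or.inr hi), hyi, mul_eq_zero, or_iff_left (hs0 k)]
  have fit_last : ∀ (w : Fin d → ℝ) (i : Fin (2 * d + 1)), (i : ℕ) = 2 * d →
      (∑ j, w j * x i j = y i ↔ ∑ k, w k * (s k : ℝ) = (∑ k, (s k : ℝ)) / 2) := by
    intro w i hi
    rw [hy, dif_neg (by omega), if_neg (by omega)]
    simp only [hx, if_pos hi]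
  constructor
  · rintro ⟨I, hI⟩
    refine ⟨fun k => if k ∈ I then 1 else 0, fun k => if k ∈ I then 0 else 1, fun i => ?_⟩
    have hi := i.isLt
    rcases lt_or_ge (i : ℕ) d with h | h
    · rw [fit_one _ ⟨i, h⟩ i rfl, fit_one _ ⟨i, h⟩ i rfl]
      by_cases hm : (⟨i, h⟩ : Fin d) ∈ I <;> simp [hm]
    rcases lt_or_ge (i : ℕ) (2 * d) with h' | h'
    · have hid : (i : ℕ) - d < d := by omega
      have hval : (i : ℕ) = ((⟨i - d, hid⟩ : Fin d) : ℕ) + d := by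
        change (i : ℕ) = (i : ℕ) - d + d
        omega
      rw [fit_zero _ _ i hval, fit_zero _ _ i hval]
      by_cases hm : (⟨i - d, hid⟩ : Fin d) ∈ I <;> simp [hm]
    · left
      rw [fit_last _ i (by omega)]
      exact (partition_iff_indicator s I).1 hI
  · rintro ⟨w₁, w₂, h⟩
    have hw : ∀ k, (w₁ k = 1 ∧ w₂ k = 0) ∨ (w₁ k = 0 ∧ w₂ k = 1) := by
      intro k
      have hk := k.isLt
      have h1 := h ⟨k, by omega⟩
      have h0 := h ⟨k + d, by omega⟩
      rw [fit_one _ k _ rfl, fit_one _ k _ rfl] at h1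
      rw [fit_zero _ k _ rfl, fit_zero _ k _ rfl] at h0
      grind
    have solves : ∀ w : Fin d → ℝ, (∀ k, w k = 1 ∨ w k = 0) →
        ∑ k, w k * (s k : ℝ) = (∑ k, (s k : ℝ)) / 2 →
        ∃ I : Finset (Fin d), ∑ i ∈ I, s i = ∑ i ∈ Iᶜ, s i := by
      intro w hw01 hsum
      classical
      refine ⟨Finset.univ.filter fun k => w k = 1, (partition_iff_indicator s _).2 ?_⟩
      rw [← hsum]
      refine Finset.sum_congr rfl fun k _ => ?_
      rcases hw01 k with hk | hk <;> simp [hk]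
    have hl := h ⟨2 * d, by omega⟩
    rw [fit_last _ _ rfl, fit_last _ _ rfl] at hl
    rcases hl with hl | hl
    · exact solves w₁ (fun k => (hw k).imp And.left And.left) hl
    · exact solves w₂ (fun k => (hw k).symm.imp And.right And.right) hl
end

section
/- Suppose s_i > 0 for all i ∈ {1,…,d}, and suppose w₁, w₂ ∈ ℝ^d satisfy: for every index i ∈ {1,…,2d}, either w₁ᵀx_i = y_i or w₂ᵀx_i = y_i. Then for each coordinate i ∈ {1,…,d}, the i-th entry of w₁ belongs to {0,1} and the i-th entry of w₂ equals 1 minus the i-th entry of w₁. -/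
/-!
The points with indices `j` and `j + d` are both supported on coordinate `j`, so every inner product
collapses to `w j * s j`. Cancelling `s j > 0`, the first point forces one of `w₁ j, w₂ j` to be `1`
and the second forces one of them to be `0`; a single entry cannot be both.
-/

/-- If `w₁, w₂` exactly fit the `2d` data points `(s_i e_i, s_i)` and
`(s_i e_i, 0)` (with `s_i > 0`), then each entry `w₁ i` is `0` or `1` and
`w₂ i = 1 - w₁ i`. -/
theorem stmt_3 (d : ℕ) (s : Fin d → ℤ) (hs : ∀ i, 0 < s i)
    (x : Fin (2 * d) → Fin d → ℝ) (y : Fin (2 * d) → ℝ)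
    (hx : ∀ (i : Fin (2 * d)) (k : Fin d),
      x i k = if (i : ℕ) = (k : ℕ) ∨ (i : ℕ) = (k : ℕ) + d then (s k : ℝ) else 0)
    (hy : ∀ i : Fin (2 * d),
      y i = if h : (i : ℕ) < d then (s ⟨(i : ℕ), h⟩ : ℝ) else 0)
    (w₁ w₂ : Fin d → ℝ)
    (hfit : ∀ i : Fin (2 * d),
      (∑ k, w₁ k * x i k = y i) ∨ (∑ k, w₂ k * x i k = y i)) :
    ∀ i : Fin d, (w₁ i = 0 ∨ w₁ i = 1) ∧ w₂ i = 1 - w₁ i := by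
  intro j
  have hsj : (s j : ℝ) ≠ 0 := by exact_mod_cast (hs j).ne'
  have hj := j.isLt
  have sum_left (w : Fin d → ℝ) : ∑ k, w k * x ⟨j, by omega⟩ k = w j * s j := by
    rw [Finset.sum_eq_single j]
    · simp [hx]
    · intro k _ hk
      have hne : (j : ℕ) ≠ k := fun h => hk (Fin.ext h.symm)
      have hne' : (j : ℕ) ≠ k + d := by omega
      simp [hx, hne, hne']
    · simp
  have sum_right (w : Fin d → ℝ) : ∑ k, w k * x ⟨j + d, by omega⟩ k = w j * s j := by
    rw [Finset.sum_eq_single j]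
    · simp [hx]
    · intro k _ hk
      have hne : (j : ℕ) ≠ k := fun h => hk (Fin.ext h.symm)
      have hne' : (j : ℕ) + d ≠ k := by omega
      simp [hx, hne, hne']
    · simp
  have hone := hfit ⟨j, by omega⟩
  have hzero := hfit ⟨j + d, by omega⟩
  rw [sum_left, sum_left, hy] at hone
  rw [sum_right, sum_right, hy] at hzero
  simp [hsj] at hone hzero
  rcases hone with h | h <;> rcases hzero with h' | h' <;> simp_all
end

section
/- Let w_1,…,w_n ∈ ℝ^d be pairwise distinct parameter vectors and let (x_i, y_i)_{i=1}^N ⊂ ℝ^d × ℝ be data in general position, meaning: no linear hyperplane {x ∈ ℝ^d : hᵀx = 0} with h ≠ 0 contains more than d of the points x_i, and no linear hyperplane of ℝ^{d+1} contains more than d+1 of the lifted points z_i = (x_i, y_i). Then the set E = { i ∈ {1,…,N} : ∃ j ≠ k in {1,…,n}, |y_i − w_jᵀx_i| = |y_i − w_kᵀx_i| } has cardinality at most (2d+1)·n·(n−1)/2. -/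
/-!
If `|a| = |b|` then `a = b` or `a = -b`. Applied to the errors of two distinct models `w j`, `w k`,
the first case puts `x i` on the hyperplane with normal `w j - w k ≠ 0`, which holds at most `d` of
the points, and the second puts the lifted point `(x i, y i)` on the hyperplane with normal
`(w j + w k, -2) ≠ 0`, which holds at most `d + 1` of them. So each of the `n (n - 1) / 2` unordered
pairs of models contributes at most `2 d + 1` indices.
-/

/-- Under general position of the points `x_i` in `ℝ^d` and of the lifted points
`z_i = (x_i, y_i)` in `ℝ^{d+1}`, and for pairwise distinct parameter vectors
`w_1, …, w_n`, the set `E` of indices where two models have equal absolute error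
has cardinality at most `(2d+1)·n·(n−1)/2`. -/
theorem stmt_8 (d n N : ℕ) (w : Fin n → Fin d → ℝ) (hw : Function.Injective w)
    (x : Fin N → Fin d → ℝ) (y : Fin N → ℝ)
    (hgen1 : ∀ h : Fin d → ℝ, h ≠ 0 →
      {i : Fin N | ∑ t, h t * x i t = 0}.ncard ≤ d)
    (hgen2 : ∀ (g : Fin d → ℝ) (c : ℝ), ¬(g = 0 ∧ c = 0) →
      {i : Fin N | ∑ t, g t * x i t + c * y i = 0}.ncard ≤ d + 1) :
    {i : Fin N | ∃ j k : Fin n, j ≠ k ∧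
        |y i - ∑ t, w j t * x i t| = |y i - ∑ t, w k t * x i t|}.ncard ≤
      (2 * d + 1) * n * (n - 1) / 2 := by
  classical
  set S : Fin n → Fin n → Set (Fin N) := fun j k =>
    {i | |y i - ∑ t, w j t * x i t| = |y i - ∑ t, w k t * x i t|} with hS
  have hpair : ∀ j k : Fin n, j ≠ k → (S j k).ncard ≤ 2 * d + 1 := by
    intro j k hjk
    have hsub : S j k ⊆ {i | ∑ t, (w j - w k) t * x i t = 0} ∪
        {i | ∑ t, (w j + w k) t * x i t + (-2) * y i = 0} := by
      intro i hi
      simp only [Set.mem_union, Set.mem_setOf_eq, Pi.sub_apply, Pi.add_apply, sub_mul, add_mul,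
        Finset.sum_sub_distrib, Finset.sum_add_distrib]
      rcases abs_eq_abs.mp hi with h | h
      · left; linarith
      · right; linarith
    have h1 := hgen1 (w j - w k) (sub_ne_zero.mpr (hw.ne hjk))
    have h2 := hgen2 (w j + w k) (-2) (by norm_num)
    have h3 := Set.ncard_le_ncard hsub (Set.toFinite _)
    have h4 := h3.trans (Set.ncard_union_le _ _)
    omega
  -- `S` is symmetric, so pairs with `j < k` suffice.
  have hE : {i : Fin N | ∃ j k : Fin n, j ≠ k ∧
      |y i - ∑ t, w j t * x i t| = |y i - ∑ t, w k t * x i t|} ⊆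
      ((Finset.univ.biUnion fun k : Fin n =>
        (Finset.Iio k).biUnion fun j => (S j k).toFinset : Finset (Fin N)) : Set (Fin N)) := by
    rintro i ⟨j, k, hjk, h⟩
    simp only [Finset.mem_coe, Finset.mem_biUnion, Finset.mem_univ, true_and, Finset.mem_Iio,
      Set.mem_toFinset]
    rcases lt_or_gt_of_ne hjk with hlt | hlt
    · exact ⟨k, j, hlt, h⟩
    · exact ⟨j, k, hlt, h.symm⟩
  calc _ ≤ _ := Set.ncard_le_ncard hE (Set.toFinite _)
    _ = _ := Set.ncard_coe_finset _
    _ ≤ ∑ k : Fin n, (k : ℕ) * (2 * d + 1) := by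
      refine Finset.card_biUnion_le.trans (Finset.sum_le_sum fun k _ => ?_)
      rw [← Fin.card_Iio k]
      refine Finset.card_biUnion_le_card_mul _ _ _ fun j hj => ?_
      rw [← Set.ncard_eq_toFinset_card']
      exact hpair j k (Finset.mem_Iio.mp hj).ne
    _ = (∑ k ∈ Finset.range n, k) * (2 * d + 1) := by
      rw [← Finset.sum_mul, Fin.sum_univ_eq_sum_range (fun k => k)]
    _ ≤ (2 * d + 1) * n * (n - 1) / 2 := by
      rw [Nat.le_div_iff_mul_le two_pos, mul_right_comm, Finset.sum_range_id_mul_two]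
      exact le_of_eq (by ac_rfl)
end

section
/- Let x_1,…,x_N be points in ℝ^d with N > d, and let H be the set of sign vectors b ∈ {−1,+1}^N such that there exists h ∈ ℝ^d with hᵀx_i ≠ 0 and b_i = sign(hᵀx_i) for all i ∈ {1,…,N}. Then |H| ≤ 2^d · C(N, d−1), where C(N, d−1) is the binomial coefficient. -/
/-!
Negating `h` negates the sign vector, so exactly half of the classifications give the first point
the sign `+`. Write `N = n + 1`. Recording such a classification by its set of positive points
among the other `n` gives the family `posFamily x`. If this family shattered a set `s` of `d`
points, then `x 0` and the `x i.succ`, `i ∈ s`, would be `d + 1` vectors of `ℝ^d`; in a nontrivial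
linear relation between them, normalised so that `x 0` has a nonnegative coefficient, some admissible
`h` takes on each vector with nonzero coefficient the sign of that coefficient, and pairing `h` with
the relation gives a positive number equal to zero. Hence the VC dimension is less than `d`, and the Sauer–Shelah lemma
gives the Cover bound `2 * ∑ k < d, C(N - 1, k)`. The estimate `∑ k ≤ m, C(n, k) ≤ 2 ^ m * C(n + 1, m)`
for `m ≤ n`, an induction on Pascal's rule, finishes the proof.
-/

lemma sum_choose_le_two_pow_mul (n : ℕ) : ∀ m, m ≤ n →
    ∑ k ∈ Finset.range (m + 1), n.choose k ≤ 2 ^ m * (n + 1).choose m := by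
  induction n with
  | zero => intro m hm; obtain rfl : m = 0 := by omega
            simp
  | succ n ih =>
    intro m hm
    rcases Nat.eq_or_lt_of_le hm with rfl | hlt
    · rw [Nat.sum_range_choose]
      exact Nat.le_mul_of_pos_right _ (Nat.choose_pos (by omega))
    · cases m with
      | zero => simp
      | succ m =>
        have h1 := ih (m + 1) (by omega)
        have h2 := ih m (by omega)
        have pascal : ∑ k ∈ Finset.range (m + 1 + 1), (n + 1).choose k =
            ∑ k ∈ Finset.range (m + 1), n.choose k +
              ∑ k ∈ Finset.range (m + 1 + 1), n.choose k := by
          rw [Finset.sum_range_succ' _ (m + 1), Finset.sum_range_succ' (fun k => n.choose k) (m + 1)]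
          simp only [Nat.choose_succ_succ, Finset.sum_add_distrib, Nat.choose_zero_right]
          ring
        rw [pascal, Nat.choose_succ_succ' (n + 1) m]
        have h3 : 2 ^ m * (n + 1).choose m ≤ 2 ^ (m + 1) * (n + 1).choose m :=
          Nat.mul_le_mul_right _ (Nat.pow_le_pow_right (by norm_num) (by omega))
        rw [mul_add]
        omega

open Classical in
/-- The sets of positive points, among all points but the first, of the homogeneous linear
classifiers that are positive at the first point and nonzero at every other point. -/
noncomputable def posFamily {d n : ℕ} (x : Fin (n + 1) → Fin d → ℝ) : Finset (Finset (Fin n)) :=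
  {s | ∃ h : Fin d → ℝ, 0 < h ⬝ᵥ x 0 ∧
    ∀ i : Fin n, h ⬝ᵥ x i.succ ≠ 0 ∧ (i ∈ s ↔ 0 < h ⬝ᵥ x i.succ)}

/-- The points indexed by a shattered set, together with the first point, are linearly independent,
which bounds the number of them by `d`. -/
lemma card_lt_of_shatters {d n : ℕ} (x : Fin (n + 1) → Fin d → ℝ) (s : Finset (Fin n))
    (hs : (posFamily x).Shatters s) : s.card < d := by
  classical
  by_contra! hcard
  let v : Option s → Fin d → ℝ := fun o => o.elim (x 0) (fun i => x i.1.succ)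
  have hdep : ¬ LinearIndependent ℝ v := by
    intro hli
    have := hli.fintype_card_le_finrank
    simp at this
    omega
  have hrel : ∃ g : Option s → ℝ, ∑ o, g o • v o = 0 ∧ (∃ o, g o ≠ 0) ∧ 0 ≤ g none := by
    obtain ⟨g, hg, o, ho⟩ := Fintype.not_linearIndependent_iff.1 hdep
    rcases le_total 0 (g none) with h0 | h0
    · exact ⟨g, hg, ⟨o, ho⟩, h0⟩
    · refine ⟨-g, by simp [hg], ⟨o, by simpa using ho⟩, by simpa using h0⟩
  obtain ⟨g, hg, ⟨o, ho⟩, h0⟩ := hrel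
  obtain ⟨u, hu, hut⟩ := hs (t := {i ∈ s | ∃ hi : i ∈ s, 0 < g (some ⟨i, hi⟩)})
    (Finset.filter_subset _ _)
  obtain ⟨h, hpos, hh⟩ := (Finset.mem_filter.1 hu).2
  have hmem (i : s) : 0 < h ⬝ᵥ x i.1.succ ↔ 0 < g (some i) := by
    rw [← (hh i).2]
    have := Finset.ext_iff.1 hut i
    simpa using this
  have hne (o) : h ⬝ᵥ v o ≠ 0 := by
    cases o with
    | none => exact hpos.ne'
    | some i => exact (hh i).1
  have hnonneg (o) : 0 ≤ g o * (h ⬝ᵥ v o) := by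
    cases o with
    | none => exact mul_nonneg h0 hpos.le
    | some i =>
      rcases lt_or_ge 0 (g (some i)) with hi | hi
      · exact (mul_pos hi ((hmem i).2 hi)).le
      · exact mul_nonneg_of_nonpos_of_nonpos hi (not_lt.1 fun hc => absurd ((hmem i).1 hc) hi.not_gt)
  have hsum : ∑ o, g o * (h ⬝ᵥ v o) = 0 := by
    have := congrArg (fun w => h ⬝ᵥ w) hg
    simpa [dotProduct_sum, dotProduct_smul] using this
  have hz := (Finset.sum_eq_zero_iff_of_nonneg fun o _ => hnonneg o).1 hsum o (Finset.mem_univ o)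
  exact (mul_ne_zero ho (hne o)) hz

lemma card_posFamily_le {m n : ℕ} (x : Fin (n + 1) → Fin (m + 1) → ℝ) :
    (posFamily x).card ≤ ∑ k ∈ Finset.range (m + 1), n.choose k := by
  classical
  have hvc : (posFamily x).vcDim ≤ m := by
    refine Finset.sup_le fun s hs => ?_
    have := card_lt_of_shatters x s (Finset.mem_shatterer.1 hs)
    omega
  refine (Finset.card_le_card_shatterer _).trans (Finset.card_shatterer_le_sum_vcDim.trans ?_)
  rw [Fintype.card_fin]
  refine Finset.sum_le_sum_of_subset fun k hk => ?_
  simp at hk ⊢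
  omega

/-- Each classification is determined by the sign `σ` of the first point and the set of points
sharing that sign. -/
lemma classifications_subset {d n : ℕ} (x : Fin (n + 1) → Fin d → ℝ) :
    {b : Fin (n + 1) → ℝ | ∃ h : Fin d → ℝ, ∀ i, (∑ k, h k * x i k) ≠ 0 ∧
        b i = Real.sign (∑ k, h k * x i k)} ⊆
      ↑((({1, -1} : Finset ℝ) ×ˢ posFamily x).image fun p =>
        (Fin.cons p.1 fun i => if i ∈ p.2 then p.1 else -p.1 : Fin (n + 1) → ℝ)) := by
  classical
  rintro b ⟨h, hb⟩
  change ∀ i, h ⬝ᵥ x i ≠ 0 ∧ b i = Real.sign (h ⬝ᵥ x i) at hb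
  rw [Finset.coe_image]
  rcases (hb 0).1.lt_or_gt with h0 | h0
  · refine ⟨(-1, ({i | h ⬝ᵥ x i.succ < 0} : Finset (Fin n))), ?_, ?_⟩
    · simp only [Finset.coe_product, Set.mem_prod, Finset.mem_coe]
      refine ⟨by simp, Finset.mem_filter.2 ⟨Finset.mem_univ _, -h, by simpa using h0, fun i => ?_⟩⟩
      simpa using (hb i.succ).1
    · funext j
      refine Fin.cases ?_ (fun i => ?_) j
      · simp [(hb 0).2, Real.sign_of_neg h0]
      · rw [(hb i.succ).2]
        rcases (hb i.succ).1.lt_or_gt with hi | hi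
        · simp [hi, Real.sign_of_neg hi]
        · simp [hi.not_gt, Real.sign_of_pos hi]
  · refine ⟨(1, ({i | 0 < h ⬝ᵥ x i.succ} : Finset (Fin n))), ?_, ?_⟩
    · simp only [Finset.coe_product, Set.mem_prod, Finset.mem_coe]
      refine ⟨by simp, Finset.mem_filter.2 ⟨Finset.mem_univ _, h, h0, fun i => ?_⟩⟩
      simpa using (hb i.succ).1
    · funext j
      refine Fin.cases ?_ (fun i => ?_) j
      · simp [(hb 0).2, Real.sign_of_pos h0]
      · rw [(hb i.succ).2]
        rcases (hb i.succ).1.lt_or_gt with hi | hi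
        · simp [hi.not_gt, Real.sign_of_neg hi]
        · simp [hi, Real.sign_of_pos hi]

/-- The number of binary linear classifications of `N > d` points of `ℝ^d`
produced by homogeneous linear classifiers is at most `2^d · C(N, d−1)`. -/
theorem stmt_11 (d N : ℕ) (hN : d < N) (x : Fin N → Fin d → ℝ) :
    {b : Fin N → ℝ | ∃ h : Fin d → ℝ, ∀ i : Fin N,
        (∑ k, h k * x i k) ≠ 0 ∧ b i = Real.sign (∑ k, h k * x i k)}.ncard ≤
      2 ^ d * N.choose (d - 1) := by
  classical
  obtain ⟨n, rfl⟩ : ∃ n, N = n + 1 := ⟨N - 1, by omega⟩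
  cases d with
  | zero =>
    -- In dimension `0` every value of a linear form is `0`, so there is no classification.
    rw [show {b : Fin (n + 1) → ℝ | ∃ h : Fin 0 → ℝ, ∀ i : Fin (n + 1),
        (∑ k, h k * x i k) ≠ 0 ∧ b i = Real.sign (∑ k, h k * x i k)} = ∅ by
      ext b; simp]
    simp
  | succ m =>
    refine (Set.ncard_le_ncard (classifications_subset x) (Finset.finite_toSet _)).trans ?_
    rw [Set.ncard_coe_finset]
    refine Finset.card_image_le.trans ?_
    rw [Finset.card_product]
    have h1 := (card_posFamily_le x).trans (sum_choose_le_two_pow_mul n m (by omega))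
    have h2 : ({1, -1} : Finset ℝ).card ≤ 2 := Finset.card_le_two
    calc _ ≤ 2 * (2 ^ m * (n + 1).choose m) := Nat.mul_le_mul h2 h1
      _ = _ := by rw [Nat.add_sub_cancel]; ring
end

section
/- Let (x_i, y_i)_{i=1}^N ⊂ ℝ^d × ℝ with N > d + 1, and set z_i = (x_i, y_i) ∈ ℝ^{d+1}. Let C be the set of sign vectors c ∈ {−1,+1}^N such that there exist g ∈ ℝ^{d+1} and h ∈ ℝ^d with gᵀz_i ≠ 0, hᵀx_i ≠ 0, and c_i = sign(gᵀz_i)·sign(hᵀx_i) for all i ∈ {1,…,N}. Then |C| ≤ 2^{2d+1} · C(N, d) · C(N, d−1), where C(·,·) denotes the binomial coefficient. -/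
/-!
The sign vectors in question are coordinatewise products of a sign vector of a linear classifier in
dimension `d + 1` and one of a linear classifier in dimension `d`, so it suffices to bound each
family. The bound needed is that `N` linear functionals on a space of dimension at most `e + 1`,
with `e ≤ N`, realise at most `2 ^ (e + 1) * N.choose e` sign vectors (`ncard_signPatterns_le`).

This follows from the Schläfli–Cover recursion `ncard_signPatterns_succ_le`: adding a functional
`φ₀` creates at most as many new patterns as there are old patterns realised by both a vector with
`φ₀ > 0` and a vector with `φ₀ < 0`, and such patterns are realised inside `ker φ₀` by a positive
combination of the two vectors. The kernel has dimension one less, and the bound is compatible with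
this recursion by Pascal's rule. For `d = 0` no `h` has nonzero values, so the set is empty.
-/

/-- The sign vectors, with entries `±1`, that the functionals `φ i` realise at vectors on which none
of them vanishes. -/
def signPatterns {V : Type} [AddCommGroup V] [Module ℝ V] {N : ℕ} (φ : Fin N → V →ₗ[ℝ] ℝ) :
    Set (Fin N → ℝ) :=
  {s | ∃ v : V, ∀ i, φ i v ≠ 0 ∧ s i = Real.sign (φ i v)}

section
variable {V : Type} [AddCommGroup V] [Module ℝ V] {N : ℕ}

lemma signPatterns_subset (φ : Fin N → V →ₗ[ℝ] ℝ) :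
    signPatterns φ ⊆ (Fintype.piFinset (fun _ : Fin N => ({1, -1} : Finset ℝ)) : Finset _) := by
  rintro s ⟨v, hv⟩
  simp only [Finset.mem_coe, Fintype.mem_piFinset, Finset.mem_insert, Finset.mem_singleton]
  intro i
  rw [(hv i).2]
  exact (Real.sign_apply_eq_of_ne_zero _ (hv i).1).symm

lemma signPatterns_finite (φ : Fin N → V →ₗ[ℝ] ℝ) : (signPatterns φ).Finite :=
  (Finset.finite_toSet _).subset (signPatterns_subset φ)

lemma ncard_signPatterns_le_two_pow (φ : Fin N → V →ₗ[ℝ] ℝ) :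
    (signPatterns φ).ncard ≤ 2 ^ N := by
  refine (Set.ncard_le_ncard (signPatterns_subset φ) (Finset.finite_toSet _)).trans ?_
  rw [Set.ncard_coe_finset, Fintype.card_piFinset]
  have : ({1, -1} : Finset ℝ).card = 2 := Finset.card_pair (by norm_num)
  simp [this]

lemma pos_of_one_eq_sign {r : ℝ} (h : 1 = Real.sign r) : 0 < r := by
  rcases lt_trichotomy r 0 with hr | hr | hr
  · rw [Real.sign_of_neg hr] at h; norm_num at h
  · rw [hr, Real.sign_zero] at h; norm_num at h
  · exact hr

lemma neg_of_neg_one_eq_sign {r : ℝ} (h : -1 = Real.sign r) : r < 0 := by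
  rcases lt_trichotomy r 0 with hr | hr | hr
  · exact hr
  · rw [hr, Real.sign_zero] at h; norm_num at h
  · rw [Real.sign_of_pos hr] at h; norm_num at h

lemma sign_pos_mul {c r : ℝ} (hc : 0 < c) : Real.sign (c * r) = Real.sign r := by
  rcases lt_trichotomy r 0 with hr | hr | hr
  · rw [Real.sign_of_neg hr, Real.sign_of_neg (mul_neg_of_pos_of_neg hc hr)]
  · rw [hr, mul_zero]
  · rw [Real.sign_of_pos hr, Real.sign_of_pos (mul_pos hc hr)]

/-- Positive combinations preserve a common sign. -/
lemma sign_combo {a b p q : ℝ} (ha : 0 < a) (hb : 0 < b) (hp : p ≠ 0)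
    (h : Real.sign p = Real.sign q) :
    a * p + b * q ≠ 0 ∧ Real.sign p = Real.sign (a * p + b * q) := by
  rcases lt_or_gt_of_ne hp with hp | hp
  · rw [Real.sign_of_neg hp] at h ⊢
    have hq := neg_of_neg_one_eq_sign h
    have : a * p + b * q < 0 :=
      add_neg (mul_neg_of_pos_of_neg ha hp) (mul_neg_of_pos_of_neg hb hq)
    exact ⟨this.ne, (Real.sign_of_neg this).symm⟩
  · rw [Real.sign_of_pos hp] at h ⊢
    have hq := pos_of_one_eq_sign h
    have : 0 < a * p + b * q := by positivity
    exact ⟨this.ne', (Real.sign_of_pos this).symm⟩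

/-- The Schläfli–Cover recursion: deletion of the first functional plus restriction of the others to
its kernel. -/
lemma ncard_signPatterns_succ_le (φ : Fin (N + 1) → V →ₗ[ℝ] ℝ) :
    (signPatterns φ).ncard ≤ (signPatterns fun i : Fin N => φ i.succ).ncard +
      (signPatterns fun i : Fin N => (φ i.succ).domRestrict (LinearMap.ker (φ 0))).ncard := by
  set P := signPatterns fun i : Fin N => φ i.succ with hP
  set K := signPatterns fun i : Fin N => (φ i.succ).domRestrict (LinearMap.ker (φ 0)) with hK
  let A : Set (Fin N → ℝ) := {s | (Fin.cons 1 s : Fin (N + 1) → ℝ) ∈ signPatterns φ}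
  let B : Set (Fin N → ℝ) := {s | (Fin.cons (-1) s : Fin (N + 1) → ℝ) ∈ signPatterns φ}
  have hAP : A ⊆ P := by
    rintro s ⟨v, hv⟩
    exact ⟨v, fun i => by simpa using hv i.succ⟩
  have hBP : B ⊆ P := by
    rintro s ⟨v, hv⟩
    exact ⟨v, fun i => by simpa using hv i.succ⟩
  have hPf : P.Finite := signPatterns_finite _
  have hAf : A.Finite := hPf.subset hAP
  have hBf : B.Finite := hPf.subset hBP
  have hABK : A ∩ B ⊆ K := by
    rintro s ⟨⟨v, hv⟩, ⟨w, hw⟩⟩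
    have hv0 : 0 < φ 0 v := pos_of_one_eq_sign (by simpa using (hv 0).2)
    have hw0 : φ 0 w < 0 := neg_of_neg_one_eq_sign (by simpa using (hw 0).2)
    -- the positive combination of `v` and `w` on which `φ 0` vanishes
    refine ⟨⟨(-φ 0 w) • v + (φ 0 v) • w, ?_⟩, fun i => ?_⟩
    · simp only [LinearMap.mem_ker, map_add, map_smul, smul_eq_mul]
      ring
    · have h1 := hv i.succ
      have h2 := hw i.succ
      simp only [Fin.cons_succ] at h1 h2
      have := sign_combo (neg_pos.2 hw0) hv0 h1.1 (h1.2.symm.trans h2.2)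
      rw [h1.2]
      simpa only [LinearMap.domRestrict_apply, map_add, map_smul, smul_eq_mul] using this
  have hS : signPatterns φ ⊆ (fun s : Fin N → ℝ => (Fin.cons 1 s : Fin (N + 1) → ℝ)) '' A ∪
      (fun s : Fin N → ℝ => (Fin.cons (-1) s : Fin (N + 1) → ℝ)) '' B := by
    intro s hs
    have h0 := signPatterns_subset φ hs
    simp only [Finset.mem_coe, Fintype.mem_piFinset, Finset.mem_insert,
      Finset.mem_singleton] at h0
    have hc := Fin.cons_self_tail s
    rcases h0 0 with h | h
    · rw [h] at hc
      exact Or.inl ⟨Fin.tail s, by simpa only [A, Set.mem_ofPred_eq, hc] using hs, hc⟩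
    · rw [h] at hc
      exact Or.inr ⟨Fin.tail s, by simpa only [B, Set.mem_ofPred_eq, hc] using hs, hc⟩
  calc (signPatterns φ).ncard
      ≤ _ := Set.ncard_le_ncard hS ((hAf.image _).union (hBf.image _))
    _ ≤ _ := Set.ncard_union_le _ _
    _ ≤ A.ncard + B.ncard := add_le_add (Set.ncard_image_le hAf) (Set.ncard_image_le hBf)
    _ = (A ∪ B).ncard + (A ∩ B).ncard := (Set.ncard_union_add_ncard_inter A B hAf hBf).symm
    _ ≤ P.ncard + K.ncard := add_le_add (Set.ncard_le_ncard (Set.union_subset hAP hBP) hPf)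
        (Set.ncard_le_ncard hABK (signPatterns_finite _))

/-- On a space of dimension at most one, all realised patterns agree up to a global sign. -/
lemma ncard_signPatterns_le_two [FiniteDimensional ℝ V] (hV : Module.finrank ℝ V ≤ 1)
    (φ : Fin N → V →ₗ[ℝ] ℝ) : (signPatterns φ).ncard ≤ 2 := by
  obtain ⟨v₀, hv₀⟩ := finrank_le_one_iff.1 hV
  let s₀ : Fin N → ℝ := fun i => Real.sign (φ i v₀)
  have hsub : signPatterns φ ⊆ {s₀, -s₀} := by
    rintro s ⟨v, hv⟩
    obtain ⟨c, rfl⟩ := hv₀ v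
    simp only [map_smul, smul_eq_mul] at hv
    rcases le_or_gt 0 c with hc | hc
    · left
      funext i
      have hc' : 0 < c := lt_of_le_of_ne hc fun h => (hv i).1 (by simp [← h])
      rw [(hv i).2, sign_pos_mul hc']
    · right
      funext i
      rw [(hv i).2, ← neg_neg (c * φ i v₀), Real.sign_neg, ← neg_mul, sign_pos_mul (neg_pos.2 hc)]
      rfl
  exact (Set.ncard_le_ncard hsub (Set.toFinite _)).trans (by
    simpa using Set.ncard_insert_le s₀ {-s₀})

end

/-- For the induction on `N`, the recursion splits the bound along Pascal's rule; the case `e = N`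
of the induction step is covered by the trivial bound `2 ^ N`. -/
theorem ncard_signPatterns_le (N : ℕ) : ∀ (e : ℕ) (V : Type) [AddCommGroup V] [Module ℝ V]
    [FiniteDimensional ℝ V] (φ : Fin N → V →ₗ[ℝ] ℝ), e ≤ N → Module.finrank ℝ V ≤ e + 1 →
    (signPatterns φ).ncard ≤ 2 ^ (e + 1) * N.choose e := by
  induction N with
  | zero =>
    intro e V _ _ _ φ he hV
    obtain rfl : e = 0 := by omega
    simpa using ncard_signPatterns_le_two hV φ
  | succ N ih =>
    intro e V _ _ _ φ he hV
    rcases e with _ | e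
    · simpa using ncard_signPatterns_le_two hV φ
    rcases he.eq_or_lt with he | he
    · obtain rfl : e = N := by omega
      refine (ncard_signPatterns_le_two_pow φ).trans ?_
      rw [Nat.choose_self, mul_one]
      exact Nat.pow_le_pow_right (by norm_num) (by omega)
    by_cases h0 : φ 0 = 0
    · have : signPatterns φ = ∅ := by
        ext s
        simp only [Set.mem_empty_iff_false, iff_false]
        rintro ⟨v, hv⟩
        exact (hv 0).1 (by simp [h0])
      simp [this]
    have hK : Module.finrank ℝ (LinearMap.ker (φ 0)) ≤ e + 1 := by
      have := Submodule.finrank_lt (s := LinearMap.ker (φ 0))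
        (fun h => h0 (LinearMap.ker_eq_top.1 h))
      omega
    have h1 := ih (e + 1) V (fun i => φ i.succ) (by omega) hV
    have h2 := ih e (LinearMap.ker (φ 0))
      (fun i => (φ i.succ).domRestrict (LinearMap.ker (φ 0))) (by omega) hK
    have h3 := ncard_signPatterns_succ_le φ
    rw [Nat.choose_succ_succ, pow_succ]
    rw [pow_succ] at h1
    nlinarith [Nat.zero_le (2 ^ (e + 1) * N.choose e)]


/-- The number of classifications of `N > d+1` data points produced by product
classifiers `c_i = sign(gᵀz_i)·sign(hᵀx_i)`, with `g` a linear classifier on the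
lifted points `z_i = (x_i, y_i) ∈ ℝ^{d+1}` and `h` a linear classifier on the
points `x_i ∈ ℝ^d`, is at most `2^{2d+1} · C(N, d) · C(N, d−1)`. -/
theorem stmt_12 (d N : ℕ) (hN : d + 1 < N)
    (x : Fin N → Fin d → ℝ) (y : Fin N → ℝ) :
    {c : Fin N → ℝ | ∃ (g : Fin (d + 1) → ℝ) (h : Fin d → ℝ), ∀ i : Fin N,
        (∑ k, g k * (Fin.snoc (x i) (y i) : Fin (d + 1) → ℝ) k) ≠ 0 ∧
        (∑ k, h k * x i k) ≠ 0 ∧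
        c i = Real.sign (∑ k, g k * (Fin.snoc (x i) (y i) : Fin (d + 1) → ℝ) k) *
              Real.sign (∑ k, h k * x i k)}.ncard ≤
      2 ^ (2 * d + 1) * N.choose d * N.choose (d - 1) := by
  rcases d with _ | d
  · -- there is at least one point, and the empty sum `∑ k, h k * x i k` vanishes at it
    have : {c : Fin N → ℝ | ∃ (g : Fin (0 + 1) → ℝ) (h : Fin 0 → ℝ), ∀ i : Fin N,
        (∑ k, g k * (Fin.snoc (x i) (y i) : Fin (0 + 1) → ℝ) k) ≠ 0 ∧
        (∑ k, h k * x i k) ≠ 0 ∧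
        c i = Real.sign (∑ k, g k * (Fin.snoc (x i) (y i) : Fin (0 + 1) → ℝ) k) *
              Real.sign (∑ k, h k * x i k)} = ∅ := by
      refine Set.eq_empty_of_forall_notMem ?_
      rintro c ⟨g, h, hgh⟩
      exact (hgh ⟨0, by omega⟩).2.1 (by simp)
    rw [this, Set.ncard_empty]
    exact Nat.zero_le _
  let φ : Fin N → (Fin (d + 1 + 1) → ℝ) →ₗ[ℝ] ℝ := fun i =>
    Fintype.linearCombination ℝ (Fin.snoc (x i) (y i) : Fin (d + 1 + 1) → ℝ)
  let ψ : Fin N → (Fin (d + 1) → ℝ) →ₗ[ℝ] ℝ := fun i => Fintype.linearCombination ℝ (x i)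
  have hφ := ncard_signPatterns_le N (d + 1) _ φ (by omega) (by simp)
  have hψ := ncard_signPatterns_le N d _ ψ (by omega) (by simp)
  have hfin := (signPatterns_finite φ).prod (signPatterns_finite ψ)
  refine (Set.ncard_le_ncard (t := (fun p : (Fin N → ℝ) × (Fin N → ℝ) => p.1 * p.2) ''
    (signPatterns φ ×ˢ signPatterns ψ)) ?_ (hfin.image _)).trans ?_
  · rintro c ⟨g, h, hgh⟩
    refine ⟨(fun i => Real.sign (φ i g), fun i => Real.sign (ψ i h)),
      ⟨⟨g, fun i => ⟨(hgh i).1, rfl⟩⟩, ⟨h, fun i => ⟨(hgh i).2.1, rfl⟩⟩⟩, ?_⟩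
    funext i
    exact (hgh i).2.2.symm
  · refine (Set.ncard_image_le hfin).trans ?_
    rw [Set.ncard_prod]
    refine (Nat.mul_le_mul hφ hψ).trans (le_of_eq ?_)
    rw [Nat.add_sub_cancel]
    ring
end

section
/- Let w_1,…,w_n ∈ ℝ^d, let (x, y) ∈ ℝ^d × ℝ be a point such that the absolute errors |y − w_jᵀx|, j = 1,…,n, are pairwise distinct, and for each j ∈ {1,…,n} define the vote count S(j) = #{ k ∈ {1,…,n} : k ≠ j and (y − ((w_j + w_k)/2)ᵀx)·((w_j − w_k)ᵀx) > 0 }. Then S(j) ≤ n − 1 for all j, S(j) = n − 1 holds for exactly one index j, and that index is the unique minimizer of j ↦ |y − w_jᵀx| over {1,…,n}; consequently the majority-vote rule argmax_j S(j) selects exactly the minimum-absolute-error model. -/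
/-!
Write `e j = |y - w_jᵀx|`. With `a = w_jᵀx` and `b = w_kᵀx`, the quantity deciding the vote is
`(y - (a + b) / 2) * (a - b) = ((y - b) ^ 2 - (y - a) ^ 2) / 2`, so `j` beats `k` exactly when
`e j < e k` (`vote_pos_iff`). Hence `S(j) = n - 1` says that `e j < e k` for all `k ≠ j`
(`voteCount_eq_iff`). As the errors are pairwise distinct, a minimizer of `e` over the nonempty
finite index set has this property, and no other index can have it.
-/

/-- The number of pairwise votes won by model `j` at the point `(x, y)`:
the number of indices `k ≠ j` with `(y − ((w_j+w_k)/2)ᵀx)·((w_j−w_k)ᵀx) > 0`. -/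
noncomputable def voteCount (d n : ℕ) (w : Fin n → Fin d → ℝ) (x : Fin d → ℝ) (y : ℝ)
    (j : Fin n) : ℕ :=
  {k : Fin n | k ≠ j ∧
    0 < (y - ∑ i, ((w j i + w k i) / 2) * x i) * (∑ i, (w j i - w k i) * x i)}.ncard

/-- The expression deciding the vote of `j` against `k` is half the difference of the
squared errors of `k` and `j`. -/
theorem vote_pos_iff {d n : ℕ} (w : Fin n → Fin d → ℝ) (x : Fin d → ℝ) (y : ℝ) (j k : Fin n) :
    0 < (y - ∑ i, ((w j i + w k i) / 2) * x i) * (∑ i, (w j i - w k i) * x i) ↔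
      |y - ∑ i, w j i * x i| < |y - ∑ i, w k i * x i| := by
  have h1 : ∑ i, ((w j i + w k i) / 2) * x i = (∑ i, w j i * x i + ∑ i, w k i * x i) / 2 := by
    rw [← Finset.sum_add_distrib, Finset.sum_div]
    exact Finset.sum_congr rfl fun i _ => by ring
  have h2 : ∑ i, (w j i - w k i) * x i = ∑ i, w j i * x i - ∑ i, w k i * x i := by
    rw [← Finset.sum_sub_distrib]
    exact Finset.sum_congr rfl fun i _ => by ring
  rw [h1, h2, ← sq_lt_sq]
  constructor <;> intro h <;> nlinarith

theorem ncard_ne {n : ℕ} (j : Fin n) : {k : Fin n | k ≠ j}.ncard = n - 1 := by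
  have h : {k : Fin n | k ≠ j} = {j}ᶜ := rfl
  rw [h, Set.ncard_compl, Set.ncard_singleton, Nat.card_fin]

theorem voteCount_le {d n : ℕ} (w : Fin n → Fin d → ℝ) (x : Fin d → ℝ) (y : ℝ) (j : Fin n) :
    voteCount d n w x y j ≤ n - 1 := by
  rw [← ncard_ne j]
  exact Set.ncard_le_ncard (fun k hk => hk.1) (Set.toFinite _)

/-- The maximal vote count means winning every pairwise vote, i.e. having strictly smaller
error than every other model. -/
theorem voteCount_eq_iff {d n : ℕ} (w : Fin n → Fin d → ℝ) (x : Fin d → ℝ) (y : ℝ) (j : Fin n) :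
    voteCount d n w x y j = n - 1 ↔
      ∀ k, k ≠ j → |y - ∑ i, w j i * x i| < |y - ∑ i, w k i * x i| := by
  unfold voteCount
  simp only [vote_pos_iff]
  constructor
  · intro h k hk
    have hset := Set.eq_of_subset_of_ncard_le
      (s := {k : Fin n | k ≠ j ∧ |y - ∑ i, w j i * x i| < |y - ∑ i, w k i * x i|})
      (t := {k : Fin n | k ≠ j}) (fun k hk => hk.1) (by rw [ncard_ne, h]) (Set.toFinite _)
    exact (hset.ge hk).2
  · intro h
    rw [← ncard_ne j]
    congr 1
    ext k
    exact ⟨fun hk => hk.1, fun hk => ⟨hk, h k hk⟩⟩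

/-- At a point whose absolute errors wrt. the `n` models are pairwise distinct:
every vote count satisfies `S(j) ≤ n − 1`, exactly one index attains `S(j) = n − 1`,
and any index attaining it minimizes the absolute error; hence the majority vote
`argmax_j S(j)` selects exactly the minimum-absolute-error model. -/
theorem stmt_17 (d n : ℕ) (hn : 0 < n)
    (w : Fin n → Fin d → ℝ) (x : Fin d → ℝ) (y : ℝ)
    (hdist : ∀ j k : Fin n, j ≠ k →
      |y - ∑ i, w j i * x i| ≠ |y - ∑ i, w k i * x i|) :
    (∀ j : Fin n, voteCount d n w x y j ≤ n - 1) ∧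
    (∃! j : Fin n, voteCount d n w x y j = n - 1) ∧
    (∀ j : Fin n, voteCount d n w x y j = n - 1 →
      ∀ k : Fin n, |y - ∑ i, w j i * x i| ≤ |y - ∑ i, w k i * x i|) := by
  refine ⟨voteCount_le w x y, ?_, ?_⟩
  · have : Nonempty (Fin n) := ⟨⟨0, hn⟩⟩
    obtain ⟨j, hj⟩ := Finite.exists_min fun j : Fin n => |y - ∑ i, w j i * x i|
    refine ⟨j, (voteCount_eq_iff w x y j).2 fun k hk =>
      lt_of_le_of_ne (hj k) (hdist j k hk.symm), fun k hk => ?_⟩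
    by_contra hne
    exact (hj k).not_gt ((voteCount_eq_iff w x y k).1 hk j (Ne.symm hne))
  · intro j hj k
    rcases eq_or_ne k j with rfl | hk
    · exact le_rfl
    · exact ((voteCount_eq_iff w x y j).1 hj k hk).le
end
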